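/- arXiv:1907.03088 — 2 statements merged into one kernel-verified Lean document; each statement's English description precedes it below -/
import Mathlib

section
/- (Theorem 3.1) Let ρ, x₀, y₁ ∈ ℝ and 0 < t₁ < T. Define x : [0,T] → ℝ piecewise by x(t) = E_{2/3,1}(ρ t^{2/3}) x₀ + ∫_0^t (t−θ)^{−1/3} E_{2/3,2/3}(ρ (t−θ)^{2/3}) θ dθ for t ∈ [0,t₁], and x(t) = E_{2/3,1}(ρ (t−t₁)^{2/3}) [x(t₁) + y₁] + ∫_{t₁}^t (t−θ)^{−1/3} E_{2/3,2/3}(ρ (t−θ)^{2/3}) θ dθ for t ∈ (t₁,T]. Then x does not satisfy the fractional differential equation on (t₁,T]: it is NOT the case that for all t ∈ (t₁,T], (1/Γ(1/3)) ∫_0^t (t−s)^{−2/3} x'(s) ds = ρ x(t) + t, where x' denotes the piecewise derivative of x (which exists for all s ∈ (0,t) with s ≠ t₁). -/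
/-!
The family `mlk ρ β t = t ^ (β - 1) E_{2/3,β}(ρ t ^ (2/3))` is closed under fractional integration:
the convolution of `t ^ (α - 1)` with `mlk ρ β` is `Γ(α) mlk ρ (β + α)` (`mlk_conv`, the Beta
integral applied termwise). Together with the recurrence `mlk_recurrence` this shows that the
mild-solution formula with base point `a` defines a function with integrable derivative
`mildDeriv` that solves the Caputo equation with the *same* base point `a` (`mild_caputo`).

Hence `x` solves the equation with base point `0` on `(0, t₁]`, and the equation with base point
`t₁` on `(t₁, T)`. If it also solved the equation with base point `0` after `t₁`, subtracting would
give `∫_0^{t₁} (t - s) ^ (-2/3) x'(s) ds = 0` for all `t ∈ (t₁, T)`. Differentiating repeatedly in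
`t` at a fixed point, the same holds with `(t - s) ^ (-2/3 - n)` for all `n`
(`kernel_moments`), so by the Weierstrass theorem in the variable `1 / (t - s)`, `x' = 0` almost
everywhere on `(0, t₁)` (`ae_zero_of_potential_zero`). Then `x = x₀` on `(0, t₁]`, and the
equation there reads `0 = ρ x₀ + t` for every `t ∈ (0, t₁]`, which is absurd.
-/

/-- The (real) Mittag-Leffler function `E_{α,β}(x) = ∑_{j=0}^∞ x^j / Γ(αj + β)`. -/
noncomputable def mlf (α β x : ℝ) : ℝ := ∑' j : ℕ, x ^ j / Real.Gamma (α * j + β)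

open MeasureTheory Set Filter Topology

/-! ### Mittag-Leffler series and their fractional integrals -/

/-- Super-exponential growth of `Γ`, obtained by discarding the part of the Euler integral
below `M`. -/
lemma Gamma_lower_bound {M x : ℝ} (hM : 0 < M) (hx : 1 ≤ x) :
    Real.exp (-M) * M ^ (x - 1) ≤ Real.Gamma x := by
  have hx0 : 0 < x := by linarith
  rw [Real.Gamma_eq_integral hx0]
  have hkint := Real.GammaIntegral_convergent hx0
  calc Real.exp (-M) * M ^ (x - 1)
      = ∫ t in Ioi M, Real.exp (-t) * M ^ (x - 1) := by
        rw [integral_mul_const, integral_exp_neg_Ioi]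
    _ ≤ ∫ t in Ioi M, Real.exp (-t) * t ^ (x - 1) := by
        refine setIntegral_mono_on ((integrableOn_exp_neg_Ioi M).mul_const _)
          (hkint.mono_set (Ioi_subset_Ioi hM.le)) measurableSet_Ioi fun t ht => ?_
        have ht' : M ≤ t := le_of_lt ht
        have : 0 ≤ x - 1 := by linarith
        gcongr
    _ ≤ ∫ t in Ioi 0, Real.exp (-t) * t ^ (x - 1) := by
        refine setIntegral_mono_set hkint ?_ (Ioi_subset_Ioi hM.le).eventuallyLE
        filter_upwards [ae_restrict_mem measurableSet_Ioi] with t ht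
        have : (0 : ℝ) < t := ht
        positivity

lemma ml_summable {β : ℝ} (hβ : 0 < β) (x : ℝ) :
    Summable fun j : ℕ => x ^ j / Real.Gamma ((2 : ℝ) / 3 * j + β) := by
  -- `M ^ (2/3) = 2 * (|x| + 1)` makes the bounding geometric series converge
  set K : ℝ := 2 * (|x| + 1) with hK
  have hKpos : 0 < K := by positivity
  set M : ℝ := K ^ ((3 : ℝ) / 2) with hMdef
  have hM : 0 < M := by positivity
  have hMj : ∀ j : ℕ, M ^ ((2 : ℝ) / 3 * j) = K ^ j := by
    intro j
    rw [hMdef, ← Real.rpow_mul hKpos.le, ← Real.rpow_natCast]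
    congr 1; ring
  have hgeo : Summable fun j : ℕ => (Real.exp M * M ^ (1 - β)) * ((1 : ℝ) / 2) ^ j :=
    summable_geometric_two.mul_left _
  refine Summable.of_norm_bounded_eventually_nat hgeo ?_
  filter_upwards [eventually_ge_atTop 2] with j hj
  have hj' : (2 : ℝ) ≤ j := by exact_mod_cast hj
  have hG := Gamma_lower_bound hM (x := (2 : ℝ) / 3 * j + β) (by linarith)
  have hlow : 0 < Real.exp (-M) * M ^ ((2 : ℝ) / 3 * j + β - 1) := by positivity
  have hxK : |x| ^ j ≤ ((1 : ℝ) / 2) ^ j * K ^ j := by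
    rw [← mul_pow]
    gcongr
    rw [hK]; linarith
  rw [norm_div, norm_pow, Real.norm_eq_abs, Real.norm_of_nonneg (hlow.le.trans hG)]
  calc |x| ^ j / Real.Gamma ((2 : ℝ) / 3 * j + β)
      ≤ (((1 : ℝ) / 2) ^ j * K ^ j) / (Real.exp (-M) * M ^ ((2 : ℝ) / 3 * j + β - 1)) := by
        gcongr
    _ = _ := by
        have : M ^ ((2 : ℝ) / 3 * j + β - 1) = K ^ j * (M ^ (1 - β))⁻¹ := by
          rw [← hMj, ← Real.rpow_neg hM.le, ← Real.rpow_add hM]; congr 1; ring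
        rw [this, Real.exp_neg]
        have h1 : (0:ℝ) < M ^ (1 - β) := by positivity
        field_simp

lemma Gamma_arg_pos {β : ℝ} (hβ : 0 < β) (j : ℕ) :
    0 < Real.Gamma ((2 : ℝ) / 3 * j + β) := Real.Gamma_pos_of_pos (by positivity)

lemma mlf_continuous {β : ℝ} (hβ : 0 < β) : Continuous fun x => mlf (2 / 3) β x := by
  rw [continuous_iff_continuousAt]
  intro x
  have : ContinuousOn (fun x => mlf (2 / 3) β x) (Metric.ball 0 (|x| + 1)) := by
    refine continuousOn_tsum (u := fun j : ℕ => (|x| + 1) ^ j / Real.Gamma ((2 : ℝ) / 3 * j + β))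
      (fun j => by fun_prop) (ml_summable hβ _) ?_
    intro j y hy
    have hy' : |y| ≤ |x| + 1 := by simpa using (mem_ball_zero_iff.1 hy).le
    rw [norm_div, norm_pow, Real.norm_eq_abs, Real.norm_of_nonneg (Gamma_arg_pos hβ j).le]
    have := Gamma_arg_pos hβ j
    gcongr
  exact this.continuousAt (Metric.isOpen_ball.mem_nhds (by simp))

/-- The fractional power family `t ^ (β - 1) E_{2/3,β}(ρ t ^ (2/3))`. Fractional integration of
order `α` sends the member of index `β` to the one of index `β + α`. -/
noncomputable def mlk (ρ β t : ℝ) : ℝ := t ^ (β - 1) * mlf (2 / 3) β (ρ * t ^ ((2 : ℝ) / 3))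

lemma mlk_recurrence (ρ : ℝ) {β t : ℝ} (hβ : 0 < β) (ht : 0 < t) :
    mlk ρ β t = t ^ (β - 1) / Real.Gamma β + ρ * mlk ρ (β + 2 / 3) t := by
  unfold mlk mlf
  rw [(ml_summable hβ _).tsum_eq_zero_add, mul_add, ← tsum_mul_left, ← tsum_mul_left,
    ← tsum_mul_left]
  congr 1
  · simp [div_eq_mul_inv]
  · congr 1 with j
    have h1 : (2 : ℝ) / 3 * ((j + 1 : ℕ) : ℝ) + β = 2 / 3 * j + (β + 2 / 3) := by push_cast; ring
    have h2 : t ^ (β + 2 / 3 - 1) = t ^ (β - 1) * t ^ ((2 : ℝ) / 3) := by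
      rw [← Real.rpow_add ht]; congr 1; ring
    rw [h1, h2]; ring

lemma mlk_continuousOn (ρ : ℝ) {β : ℝ} (hβ : 0 < β) : ContinuousOn (mlk ρ β) (Ioi 0) := by
  refine ContinuousOn.mul ?_ ?_
  · exact continuousOn_id.rpow_const fun t ht => Or.inl (ne_of_gt ht)
  · refine (mlf_continuous hβ).comp_continuousOn ?_
    exact continuousOn_const.mul (continuousOn_id.rpow_const fun t ht => Or.inr (by norm_num))

lemma beta_integral {α β t : ℝ} (hα : 0 < α) (hβ : 0 < β) (ht : 0 < t) :
    ∫ s in (0 : ℝ)..t, (t - s) ^ (α - 1) * s ^ (β - 1) =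
      t ^ (β + α - 1) * (Real.Gamma β * Real.Gamma α / Real.Gamma (β + α)) := by
  have h := Complex.betaIntegral_scaled (β : ℂ) (α : ℂ) ht
  rw [Complex.betaIntegral_eq_Gamma_mul_div _ _ (by simpa) (by simpa)] at h
  apply Complex.ofReal_injective
  rw [← intervalIntegral.integral_ofReal]
  have h2 : ∫ s in (0 : ℝ)..t, (((t - s) ^ (α - 1) * s ^ (β - 1) : ℝ) : ℂ) =
      ∫ x in (0 : ℝ)..t, (x : ℂ) ^ ((β : ℂ) - 1) * ((t : ℂ) - x) ^ ((α : ℂ) - 1) := by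
    refine intervalIntegral.integral_congr fun s hs => ?_
    rw [uIcc_of_le ht.le] at hs
    rw [Complex.ofReal_mul, Complex.ofReal_cpow hs.1, Complex.ofReal_cpow (by linarith [hs.2])]
    push_cast; ring
  rw [h2, h, Complex.ofReal_mul, Complex.ofReal_cpow ht.le]
  push_cast [← Complex.Gamma_ofReal]
  rfl

lemma beta_integrable {α β t : ℝ} (hα : 0 < α) (hβ : 0 < β) (ht : 0 < t) :
    IntervalIntegrable (fun s => (t - s) ^ (α - 1) * s ^ (β - 1)) volume 0 t := by
  apply intervalIntegral.intervalIntegrable_of_integral_ne_zero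
  rw [beta_integral hα hβ ht]
  have h1 := Real.Gamma_pos_of_pos hα
  have h2 := Real.Gamma_pos_of_pos hβ
  have h3 := Real.Gamma_pos_of_pos (add_pos hβ hα)
  positivity

lemma mlk_conv_integrable (ρ : ℝ) {α β t : ℝ} (hα : 0 < α) (hβ : 0 < β) (ht : 0 < t) :
    IntervalIntegrable (fun s => (t - s) ^ (α - 1) * mlk ρ β s) volume 0 t := by
  have h : ContinuousOn (fun s : ℝ => mlf (2 / 3) β (ρ * s ^ ((2 : ℝ) / 3))) (uIcc 0 t) := by
    refine (mlf_continuous hβ).comp_continuousOn ?_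
    exact continuousOn_const.mul (continuousOn_id.rpow_const fun t ht => Or.inr (by norm_num))
  simpa only [mlk, mul_assoc] using (beta_integrable hα hβ ht).mul_continuousOn h

/-- Fractional integration of the family, by integrating the series termwise with the Beta
integral. -/
lemma mlk_conv (ρ : ℝ) {α β t : ℝ} (hα : 0 < α) (hβ : 0 < β) (ht : 0 < t) :
    ∫ s in (0 : ℝ)..t, (t - s) ^ (α - 1) * mlk ρ β s =
      Real.Gamma α * mlk ρ (β + α) t := by
  have key := intervalIntegral.hasSum_integral_of_dominated_convergence (μ := volume)
    (a := 0) (b := t)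
    (F := fun (j : ℕ) s => ((t - s) ^ (α - 1) * s ^ (β - 1)) *
      ((ρ * s ^ ((2 : ℝ) / 3)) ^ j / Real.Gamma ((2 : ℝ) / 3 * j + β)))
    (f := fun s => (t - s) ^ (α - 1) * mlk ρ β s)
    (fun j s => ((t - s) ^ (α - 1) * s ^ (β - 1)) *
      ((|ρ| * t ^ ((2 : ℝ) / 3)) ^ j / Real.Gamma ((2 : ℝ) / 3 * j + β)))
    (fun j => by
      refine AEStronglyMeasurable.mul ?_ ?_
      · have := (beta_integrable hα hβ ht).aestronglyMeasurable
        rwa [← uIoc_of_le ht.le] at this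
      · apply Measurable.aestronglyMeasurable
        fun_prop)
    (fun j => by
      refine ae_of_all _ fun s hs => ?_
      rw [uIoc_of_le ht.le] at hs
      have h0 : 0 ≤ t - s := by linarith [hs.2]
      have hs0 := hs.1.le
      have hs1 := hs.2
      have hG := Gamma_arg_pos hβ j
      rw [norm_mul, Real.norm_of_nonneg (by positivity : 0 ≤ (t - s) ^ (α - 1) * s ^ (β - 1)),
        norm_div, norm_pow, norm_mul, Real.norm_eq_abs ρ, Real.norm_of_nonneg hG.le,
        Real.norm_of_nonneg (by positivity : (0:ℝ) ≤ s ^ ((2 : ℝ) / 3))]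
      gcongr)
    (ae_of_all _ fun s _ => (ml_summable hβ _).mul_left _)
    (by
      simp_rw [tsum_mul_left]
      exact (beta_integrable hα hβ ht).mul_const _)
    (ae_of_all _ fun s _ => by
      have := ((ml_summable hβ (ρ * s ^ ((2 : ℝ) / 3))).hasSum).mul_left
        ((t - s) ^ (α - 1) * s ^ (β - 1))
      simpa only [mlk, mlf, mul_assoc] using this)
  rw [← key.tsum_eq]
  unfold mlk mlf
  rw [← mul_assoc, ← tsum_mul_left]
  congr 1 with j
  have hG := Gamma_arg_pos hβ j
  have hpos : 0 < (2 : ℝ) / 3 * j + β := by positivity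
  have h1 : ∀ s ∈ uIcc 0 t, ((t - s) ^ (α - 1) * s ^ (β - 1)) *
      ((ρ * s ^ ((2 : ℝ) / 3)) ^ j / Real.Gamma ((2 : ℝ) / 3 * j + β)) =
      (ρ ^ j / Real.Gamma ((2 : ℝ) / 3 * j + β)) *
        ((t - s) ^ (α - 1) * (s ^ (β - 1) * s ^ ((2 : ℝ) / 3 * j))) := by
    intro s hs
    rw [uIcc_of_le ht.le] at hs
    rw [mul_pow, Real.rpow_mul hs.1, Real.rpow_natCast]; ring
  have h2 : ∫ s in (0 : ℝ)..t, (t - s) ^ (α - 1) * (s ^ (β - 1) * s ^ ((2 : ℝ) / 3 * j)) =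
      ∫ s in (0 : ℝ)..t, (t - s) ^ (α - 1) * s ^ ((2 : ℝ) / 3 * j + β - 1) := by
    refine intervalIntegral.integral_congr_ae (ae_of_all _ fun s hs => ?_)
    rw [uIoc_of_le ht.le] at hs
    rw [← Real.rpow_add hs.1]; congr 2; ring
  rw [intervalIntegral.integral_congr h1, intervalIntegral.integral_const_mul, h2,
    beta_integral hα hpos ht]
  have h3 : t ^ ((2 : ℝ) / 3 * j + β + α - 1) = t ^ (β + α - 1) * (t ^ ((2 : ℝ) / 3)) ^ j := by
    rw [← Real.rpow_natCast, ← Real.rpow_mul ht.le, ← Real.rpow_add ht]; congr 1; ring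
  rw [h3, mul_pow, ← add_assoc]
  field_simp

/-! ### The mild solution and its Caputo derivative -/

/-- Derivative of the mild solution of the mild solution with base point `a` and initial value `c`,
as a function of the elapsed time. -/
noncomputable def mildDeriv (ρ c a s : ℝ) : ℝ :=
  (c * ρ + a) * mlk ρ (2 / 3) s + mlk ρ (5 / 3) s

lemma mildDeriv_continuousOn (ρ c a : ℝ) : ContinuousOn (mildDeriv ρ c a) (Ioi 0) :=
  (continuousOn_const.mul (mlk_continuousOn ρ (by norm_num))).add
    (mlk_continuousOn ρ (by norm_num))

lemma mildDeriv_conv_integrable (ρ c a : ℝ) {α τ : ℝ} (hα : 0 < α) (hτ : 0 < τ) :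
    IntervalIntegrable (fun s => (τ - s) ^ (α - 1) * mildDeriv ρ c a s) volume 0 τ := by
  have h1 := (mlk_conv_integrable ρ (β := 2 / 3) hα (by norm_num) hτ).const_mul (c * ρ + a)
  have h2 := mlk_conv_integrable ρ (β := 5 / 3) hα (by norm_num) hτ
  refine (h1.add h2).congr fun s _ => ?_
  simp only [mildDeriv]; ring

lemma mildDeriv_conv (ρ c a : ℝ) {α τ : ℝ} (hα : 0 < α) (hτ : 0 < τ) :
    ∫ s in (0 : ℝ)..τ, (τ - s) ^ (α - 1) * mildDeriv ρ c a s =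
      Real.Gamma α * ((c * ρ + a) * mlk ρ (2 / 3 + α) τ + mlk ρ (5 / 3 + α) τ) := by
  have h1 := (mlk_conv_integrable ρ (β := 2 / 3) hα (by norm_num) hτ).const_mul (c * ρ + a)
  have h2 := mlk_conv_integrable ρ (β := 5 / 3) hα (by norm_num) hτ
  have : ∀ s, (τ - s) ^ (α - 1) * mildDeriv ρ c a s =
      (c * ρ + a) * ((τ - s) ^ (α - 1) * mlk ρ (2 / 3) s) + (τ - s) ^ (α - 1) * mlk ρ (5 / 3) s := by
    intro s; simp only [mildDeriv]; ring
  simp_rw [this]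
  rw [intervalIntegral.integral_add h1 h2, intervalIntegral.integral_const_mul,
    mlk_conv ρ hα (by norm_num) hτ, mlk_conv ρ hα (by norm_num) hτ]
  ring

lemma mildDeriv_integrable (ρ c a : ℝ) {τ : ℝ} (hτ : 0 < τ) :
    IntervalIntegrable (mildDeriv ρ c a) volume 0 τ := by
  simpa using mildDeriv_conv_integrable ρ c a one_pos hτ

/-- The mild-solution formula with base point `a`, in terms of the power family. -/
lemma mild_eq (ρ c a : ℝ) {t : ℝ} (ht : a < t) :
    mlf (2/3) 1 (ρ * (t - a) ^ ((2:ℝ)/3)) * c +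
        ∫ θ in a..t,
          (t - θ) ^ (-(1:ℝ)/3) * mlf (2/3) (2/3) (ρ * (t - θ) ^ ((2:ℝ)/3)) * θ =
      c * mlk ρ 1 (t - a) + a * mlk ρ (5 / 3) (t - a) + mlk ρ (8 / 3) (t - a) := by
  have hτ : 0 < t - a := sub_pos.2 ht
  have e1 : -(1:ℝ)/3 = 2 / 3 - 1 := by norm_num
  have h0 := intervalIntegral.integral_comp_sub_left (a := a) (b := t)
    (fun u => mlk ρ (2 / 3) u * (t - u)) t
  simp only [sub_self, sub_sub_cancel] at h0
  have h1 := mlk_conv_integrable ρ (α := 1) (β := 2 / 3) one_pos (by norm_num) hτ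
  have h2 := mlk_conv_integrable ρ (α := 2) (β := 2 / 3) two_pos (by norm_num) hτ
  have v1 := mlk_conv ρ (α := 1) (β := 2 / 3) one_pos (by norm_num) hτ
  have v2 := mlk_conv ρ (α := 2) (β := 2 / 3) two_pos (by norm_num) hτ
  have h3 : ∀ u, mlk ρ (2 / 3) u * (t - u) = a * ((t - a - u) ^ ((1:ℝ) - 1) * mlk ρ (2 / 3) u) +
      (t - a - u) ^ ((2:ℝ) - 1) * mlk ρ (2 / 3) u := by
    intro u
    rw [show (2:ℝ) - 1 = 1 by norm_num, sub_self, Real.rpow_zero, Real.rpow_one]; ring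
  have h4 : ∫ θ in a..t,
      (t - θ) ^ (-(1:ℝ)/3) * mlf (2/3) (2/3) (ρ * (t - θ) ^ ((2:ℝ)/3)) * θ =
      a * mlk ρ (5 / 3) (t - a) + mlk ρ (8 / 3) (t - a) := by
    rw [e1]
    refine h0.trans ?_
    simp_rw [h3]
    rw [intervalIntegral.integral_add (h1.const_mul a) h2, intervalIntegral.integral_const_mul,
      v1, v2, Real.Gamma_one, Real.Gamma_two]
    norm_num
  rw [h4]
  simp [mlk]
  ring

lemma mlk_one (ρ : ℝ) {t : ℝ} (ht : 0 < t) : mlk ρ 1 t = 1 + ρ * mlk ρ (5 / 3) t := by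
  rw [mlk_recurrence ρ one_pos ht]; norm_num

lemma mild_eq_integral (ρ c a : ℝ) {t : ℝ} (ht : a < t) :
    mlf (2/3) 1 (ρ * (t - a) ^ ((2:ℝ)/3)) * c +
        ∫ θ in a..t,
          (t - θ) ^ (-(1:ℝ)/3) * mlf (2/3) (2/3) (ρ * (t - θ) ^ ((2:ℝ)/3)) * θ =
      c + ∫ s in (0 : ℝ)..(t - a), mildDeriv ρ c a s := by
  have hτ : 0 < t - a := sub_pos.2 ht
  have h := mildDeriv_conv ρ c a one_pos hτ
  simp only [sub_self, Real.rpow_zero, one_mul, Real.Gamma_one] at h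
  rw [mild_eq ρ c a ht, h, mlk_one ρ hτ]
  norm_num
  ring

/-- The mild solution with base point `a` solves the Caputo equation with base point `a`. -/
lemma mild_caputo (ρ c a : ℝ) {t : ℝ} (ht : a < t) :
    ∫ s in (0 : ℝ)..(t - a), (t - a - s) ^ (-(2:ℝ)/3) * mildDeriv ρ c a s =
      Real.Gamma (1 / 3) * (ρ * (mlf (2/3) 1 (ρ * (t - a) ^ ((2:ℝ)/3)) * c +
        ∫ θ in a..t,
          (t - θ) ^ (-(1:ℝ)/3) * mlf (2/3) (2/3) (ρ * (t - θ) ^ ((2:ℝ)/3)) * θ) + t) := by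
  have hτ : 0 < t - a := sub_pos.2 ht
  have h := mildDeriv_conv ρ c a (α := 1 / 3) (by norm_num) hτ
  rw [show (1:ℝ) / 3 - 1 = -(2:ℝ)/3 by norm_num] at h
  have h2 : mlk ρ 2 (t - a) = (t - a) + ρ * mlk ρ (8 / 3) (t - a) := by
    rw [mlk_recurrence ρ two_pos hτ]; norm_num
  rw [h, mild_eq ρ c a ht, show (2:ℝ) / 3 + 1 / 3 = 1 by norm_num,
    show (5:ℝ) / 3 + 1 / 3 = 2 by norm_num, h2, mlk_one ρ hτ]
  ring

/-- Any function given by the mild formula on the right of `a` has derivative `mildDeriv`. -/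
lemma mild_hasDerivAt (ρ c a b : ℝ) (x : ℝ → ℝ)
    (hx : ∀ t ∈ Ioo a b, x t = c + ∫ s in (0 : ℝ)..(t - a), mildDeriv ρ c a s)
    {t : ℝ} (ht : t ∈ Ioo a b) : HasDerivAt x (mildDeriv ρ c a (t - a)) t := by
  have hτ : 0 < t - a := sub_pos.2 ht.1
  have hc : ContinuousOn (mildDeriv ρ c a) (Ioi 0) := mildDeriv_continuousOn ρ c a
  have hF := intervalIntegral.integral_hasDerivAt_right (mildDeriv_integrable ρ c a hτ)
    (hc.stronglyMeasurableAtFilter isOpen_Ioi _ hτ) (hc.continuousAt (Ioi_mem_nhds hτ))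
  have hG := (hF.comp_sub_const t a).const_add c
  refine hG.congr_of_eventuallyEq ?_
  filter_upwards [Ioo_mem_nhds ht.1 ht.2] with s hs using hx s hs

/-! ### Injectivity of the potential of a density on `(0, b)` -/

/-- Differentiating under the integral sign lowers the exponent of the kernel `(t - s) ^ p`. -/
lemma kernel_moments {b T p : ℝ} {f : ℝ → ℝ} (hb : 0 < b) (hp : p < 0)
    (hf : IntervalIntegrable f volume 0 b)
    (h : ∀ t ∈ Ioo b T, ∫ s in (0 : ℝ)..b, (t - s) ^ p * f s = 0) (n : ℕ) :
    ∀ t ∈ Ioo b T, ∫ s in (0 : ℝ)..b, (t - s) ^ (p - n) * f s = 0 := by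
  induction n with
  | zero => simpa using h
  | succ n ih =>
    intro t ht
    have hq : p - n < 0 := by
      have : (0:ℝ) ≤ n := n.cast_nonneg
      linarith
    set q : ℝ := p - n with hqdef
    have hqs : p - ((n + 1 : ℕ) : ℝ) = q - 1 := by push_cast; rw [hqdef]; ring
    rw [hqs]
    have hkint : ∀ r : ℝ, ∀ u ∈ Ioo b T,
        IntervalIntegrable (fun s => (u - s) ^ r * f s) volume 0 b := by
      intro r u hu
      refine hf.continuousOn_mul ?_
      refine ContinuousOn.rpow_const (by fun_prop) fun s hs => Or.inl ?_
      rw [uIcc_of_le hb.le] at hs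
      have := hs.2
      have := hu.1
      exact ne_of_gt (by linarith)
    -- a neighbourhood of `t` on which `u - s` stays above `m - b`
    set m : ℝ := (b + t) / 2 with hm
    have hbm : b < m := by have := ht.1; rw [hm]; linarith
    have hmt : m < t := by have := ht.1; rw [hm]; linarith
    have hder := (intervalIntegral.hasDerivAt_integral_of_dominated_loc_of_deriv_le
      (μ := volume) (a := 0) (b := b) (x₀ := t) (s := Ioo m T)
      (F := fun u s => (u - s) ^ q * f s)
      (F' := fun u s => q * (u - s) ^ (q - 1) * f s)
      (bound := fun s => |q| * (m - b) ^ (q - 1) * ‖f s‖)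
      (Ioo_mem_nhds hmt ht.2)
      (by
        filter_upwards [Ioo_mem_nhds ht.1 ht.2] with u hu
        have := (hkint q u hu).aestronglyMeasurable
        rwa [← uIoc_of_le hb.le] at this)
      (hkint q t ht)
      (by
        have := ((hkint (q - 1) t ht).const_mul q).aestronglyMeasurable
        rw [← uIoc_of_le hb.le] at this
        simpa only [mul_assoc] using this)
      (ae_of_all _ fun s hs u hu => by
        rw [uIoc_of_le hb.le] at hs
        have h1 : m - b ≤ u - s := by have := hs.2; have := hu.1; linarith
        have h2 : 0 < m - b := by linarith
        have h3 : 0 < u - s := by linarith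
        rw [norm_mul, norm_mul, Real.norm_eq_abs q,
          Real.norm_of_nonneg (by positivity : (0:ℝ) ≤ (u - s) ^ (q - 1))]
        have := Real.rpow_le_rpow_of_nonpos h2 h1 (by linarith : q - 1 ≤ 0)
        gcongr)
      (hf.norm.const_mul _)
      (ae_of_all _ fun s hs u hu => by
        rw [uIoc_of_le hb.le] at hs
        have h3 : 0 < u - s := by have := hs.2; have := hu.1; linarith
        have := ((hasDerivAt_id u).sub_const s).rpow_const (p := q) (Or.inl h3.ne')
        simpa using this.mul_const (f s))).2
    have hzero : HasDerivAt (fun u => ∫ s in (0 : ℝ)..b, (u - s) ^ q * f s) 0 t := by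
      refine (hasDerivAt_const t (0:ℝ)).congr_of_eventuallyEq ?_
      filter_upwards [Ioo_mem_nhds ht.1 ht.2] with u hu using ih u hu
    have := hder.unique hzero
    simp_rw [mul_assoc] at this
    rw [intervalIntegral.integral_const_mul] at this
    exact (mul_eq_zero.1 this).resolve_left hq.ne

/-- A function on `(0, b)` is determined by its potential `t ↦ ∫ (t - s) ^ p f(s) ds` on an
interval to the right of `b`: at a fixed `t`, the kernels `(t - s) ^ (p - n)` are `(t - s) ^ p`
times the powers of `1 / (t - s)`, so the Weierstrass approximation theorem applies. -/
lemma ae_zero_of_potential_zero {b T p : ℝ} {f : ℝ → ℝ} (hb : 0 < b) (hbT : b < T) (hp : p < 0)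
    (hf : IntervalIntegrable f volume 0 b)
    (h : ∀ t ∈ Ioo b T, ∫ s in (0 : ℝ)..b, (t - s) ^ p * f s = 0) :
    ∀ᵐ s ∂volume, s ∈ Ioo 0 b → f s = 0 := by
  have hfon : IntegrableOn f (Ioc 0 b) := (intervalIntegrable_iff_integrableOn_Ioc_of_le hb.le).1 hf
  refine isOpen_Ioo.ae_eq_zero_of_integral_contDiff_smul_eq_zero
    (hfon.mono_set Ioo_subset_Ioc_self).locallyIntegrableOn fun g hg _ hsupp => ?_
  obtain ⟨t, ht⟩ := exists_between hbT
  have hmom := fun n => kernel_moments hb hp hf h n t ht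
  have hpos : ∀ s ∈ Icc 0 b, 0 < t - s := fun s hs => by have := hs.2; have := ht.1; linarith
  set w : ℝ → ℝ := fun s => (t - s) ^ p * f s with hw
  have hkcont : ∀ r : ℝ, ContinuousOn (fun s : ℝ => (t - s) ^ r) (uIcc 0 b) := by
    intro r
    refine ContinuousOn.rpow_const (by fun_prop) fun s hs => Or.inl ?_
    rw [uIcc_of_le hb.le] at hs
    exact (hpos s hs).ne'
  have hwint : IntervalIntegrable w volume 0 b := hf.continuousOn_mul (hkcont p)
  have hinvcont : ContinuousOn (fun s : ℝ => (t - s)⁻¹) (uIcc 0 b) := by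
    refine ContinuousOn.inv₀ (by fun_prop) fun s hs => ?_
    rw [uIcc_of_le hb.le] at hs
    exact (hpos s hs).ne'
  have hpolyint : ∀ P : Polynomial ℝ,
      IntervalIntegrable (fun s => P.eval (t - s)⁻¹ * w s) volume 0 b := fun P =>
    hwint.continuousOn_mul (P.continuous.comp_continuousOn hinvcont)
  have hpoly : ∀ P : Polynomial ℝ, ∫ s in (0 : ℝ)..b, P.eval (t - s)⁻¹ * w s = 0 := by
    intro P
    induction P using Polynomial.induction_on' with
    | add P Q hP hQ =>
      simp only [Polynomial.eval_add, add_mul]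
      rw [intervalIntegral.integral_add (hpolyint P) (hpolyint Q), hP, hQ, add_zero]
    | monomial n r =>
      have : ∫ s in (0 : ℝ)..b, (Polynomial.monomial n r).eval (t - s)⁻¹ * w s =
          ∫ s in (0 : ℝ)..b, r * ((t - s) ^ (p - n) * f s) := by
        refine intervalIntegral.integral_congr fun s hs => ?_
        rw [uIcc_of_le hb.le] at hs
        have := hpos s hs
        simp only [Polynomial.eval_monomial, hw]
        rw [Real.rpow_sub this, Real.rpow_natCast, inv_pow]
        field_simp
      rw [this, intervalIntegral.integral_const_mul, hmom n, mul_zero]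
  have hg0 : ∀ s, s ∉ Ioc 0 b → g s • f s = 0 := by
    intro s hs
    have : g s = 0 := image_eq_zero_of_notMem_tsupport fun h' => hs (Ioo_subset_Ioc_self (hsupp h'))
    rw [this, zero_smul]
  have hgi : ∫ s, g s • f s = ∫ s in (0 : ℝ)..b, g s * f s := by
    rw [intervalIntegral.integral_of_le hb.le]
    exact (setIntegral_eq_integral_of_forall_compl_eq_zero hg0).symm
  rw [hgi]
  -- the test function in the variable `u = 1 / (t - s)`, divided by the weight `(t - s) ^ p`
  set φ : ℝ → ℝ := fun u => g (t - u⁻¹) * u ^ p with hφ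
  have hupos : ∀ u ∈ Icc t⁻¹ (t - b)⁻¹, 0 < u := fun u hu =>
    lt_of_lt_of_le (inv_pos.2 (by linarith [ht.1])) hu.1
  have hφc : ContinuousOn φ (Icc t⁻¹ (t - b)⁻¹) := by
    refine ContinuousOn.mul (hg.continuous.comp_continuousOn ?_) ?_
    · exact continuousOn_const.sub (continuousOn_id.inv₀ fun u hu => (hupos u hu).ne')
    · exact continuousOn_id.rpow_const fun u hu => Or.inl (hupos u hu).ne'
  have hφs : ∀ s ∈ Icc 0 b, φ (t - s)⁻¹ * w s = g s * f s := by
    intro s hs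
    have := hpos s hs
    have h1 : (t - s) ^ p ≠ 0 := (Real.rpow_pos_of_pos this p).ne'
    simp only [hφ, hw, inv_inv, sub_sub_cancel, Real.inv_rpow this.le]
    field_simp
  set C : ℝ := ∫ s in (0 : ℝ)..b, ‖w s‖ with hC
  have hC0 : 0 ≤ C := intervalIntegral.integral_nonneg hb.le fun s _ => norm_nonneg _
  have hgint : IntervalIntegrable (fun s => g s * f s) volume 0 b :=
    hf.continuousOn_mul hg.continuous.continuousOn
  have hbound : ∀ ε > 0, |∫ s in (0 : ℝ)..b, g s * f s| ≤ ε * C := by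
    intro ε hε
    obtain ⟨P, hP⟩ := exists_polynomial_near_of_continuousOn _ _ φ hφc ε hε
    have h1 : ∫ s in (0 : ℝ)..b, g s * f s =
        ∫ s in (0 : ℝ)..b, (g s * f s - P.eval (t - s)⁻¹ * w s) := by
      rw [intervalIntegral.integral_sub hgint (hpolyint P), hpoly P, sub_zero]
    rw [h1, hC, ← intervalIntegral.integral_const_mul, ← Real.norm_eq_abs]
    refine intervalIntegral.norm_integral_le_of_norm_le hb.le (ae_of_all _ fun s hs => ?_)
      (hwint.norm.const_mul ε)
    have hs' : s ∈ Icc 0 b := Ioc_subset_Icc_self hs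
    have hsp := hpos s hs'
    rw [← hφs s hs', ← sub_mul, norm_mul]
    gcongr
    rw [norm_sub_rev]
    refine (hP _ ⟨?_, ?_⟩).le
    · exact inv_anti₀ hsp (by linarith [hs'.1])
    · exact inv_anti₀ (by linarith [ht.1]) (by linarith [hs'.2])
  by_contra hne
  have hA : 0 < |∫ s in (0 : ℝ)..b, g s * f s| := abs_pos.2 hne
  set A := |∫ s in (0 : ℝ)..b, g s * f s|
  have := hbound (A / (2 * (C + 1))) (by positivity)
  have h2 : A / (2 * (C + 1)) * C < A := by
    rw [div_mul_eq_mul_div, div_lt_iff₀ (by positivity)]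
    nlinarith
  linarith

/-! ### Failure of the equation after `t₁` -/

theorem mild_solution_one_fails (ρ x₀ y₁ t₁ T : ℝ) (ht₁ : 0 < t₁) (hT : t₁ < T)
    (x : ℝ → ℝ)
    (hx0 : ∀ t ∈ Set.Icc (0 : ℝ) t₁,
      x t = mlf (2/3) 1 (ρ * t ^ ((2:ℝ)/3)) * x₀ +
        ∫ θ in (0 : ℝ)..t,
          (t - θ) ^ (-(1:ℝ)/3) * mlf (2/3) (2/3) (ρ * (t - θ) ^ ((2:ℝ)/3)) * θ)
    (hx1 : ∀ t ∈ Set.Ioc t₁ T,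
      x t = mlf (2/3) 1 (ρ * (t - t₁) ^ ((2:ℝ)/3)) * (x t₁ + y₁) +
        ∫ θ in t₁..t,
          (t - θ) ^ (-(1:ℝ)/3) * mlf (2/3) (2/3) (ρ * (t - θ) ^ ((2:ℝ)/3)) * θ) :
    ¬ ∀ t ∈ Set.Ioc t₁ T,
        (1 / Real.Gamma (1/3)) *
            ∫ s in (0 : ℝ)..t, (t - s) ^ (-(2:ℝ)/3) * deriv x s =
          ρ * x t + t := by
  intro H
  have hΓ : 0 < Real.Gamma (1 / 3) := Real.Gamma_pos_of_pos (by norm_num)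
  set D₁ := mildDeriv ρ x₀ 0 with hD₁
  set D₂ := mildDeriv ρ (x t₁ + y₁) t₁ with hD₂
  have hX0 : ∀ t ∈ Ioc 0 t₁, x t = x₀ + ∫ s in (0 : ℝ)..t, D₁ s := by
    intro t ht
    have := mild_eq_integral ρ x₀ 0 ht.1
    rw [sub_zero] at this
    rw [hx0 t (Ioc_subset_Icc_self ht), this]
  have hC0 : ∀ t ∈ Ioc 0 t₁, ∫ s in (0 : ℝ)..t, (t - s) ^ (-(2:ℝ)/3) * D₁ s =
      Real.Gamma (1 / 3) * (ρ * x t + t) := by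
    intro t ht
    have := mild_caputo ρ x₀ 0 ht.1
    rw [sub_zero] at this
    rw [hx0 t (Ioc_subset_Icc_self ht), this]
  have hd0 : ∀ s ∈ Ioo 0 t₁, deriv x s = D₁ s := by
    intro s hs
    have := mild_hasDerivAt ρ x₀ 0 t₁ x
      (fun t ht => by rw [sub_zero]; exact hX0 t (Ioo_subset_Ioc_self ht)) hs
    rw [sub_zero] at this
    exact this.deriv
  have hd1 : ∀ s ∈ Ioo t₁ T, deriv x s = D₂ (s - t₁) := by
    intro s hs
    refine (mild_hasDerivAt ρ (x t₁ + y₁) t₁ T x (fun t ht => ?_) hs).deriv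
    rw [hx1 t (Ioo_subset_Ioc_self ht), mild_eq_integral ρ _ t₁ ht.1]
  have hD₁int : IntervalIntegrable D₁ volume 0 t₁ := mildDeriv_integrable ρ x₀ 0 ht₁
  -- the memory of `(0, t₁)` contributes nothing to the Caputo derivative after `t₁`
  have hpot : ∀ t ∈ Ioo t₁ T, ∫ s in (0 : ℝ)..t₁, (t - s) ^ (-(2:ℝ)/3) * D₁ s = 0 := by
    intro t ht
    have hτ : 0 < t - t₁ := sub_pos.2 ht.1
    have hI1 : IntervalIntegrable (fun s => (t - s) ^ (-(2:ℝ)/3) * D₁ s) volume 0 t₁ := by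
      refine hD₁int.continuousOn_mul ?_
      refine ContinuousOn.rpow_const (by fun_prop) fun s hs => Or.inl ?_
      rw [uIcc_of_le ht₁.le] at hs
      have := hs.2
      exact ne_of_gt (by linarith)
    have hI2' := mildDeriv_conv_integrable ρ (x t₁ + y₁) t₁ (α := 1 / 3) (by norm_num) hτ
    rw [show (1:ℝ) / 3 - 1 = -(2:ℝ)/3 by norm_num] at hI2'
    have hI2 : IntervalIntegrable (fun s => (t - s) ^ (-(2:ℝ)/3) * D₂ (s - t₁)) volume t₁ t := by
      have := hI2'.comp_sub_right t₁
      simpa using this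
    have hv2 : ∫ s in t₁..t, (t - s) ^ (-(2:ℝ)/3) * D₂ (s - t₁) =
        Real.Gamma (1 / 3) * (ρ * x t + t) := by
      have h1 := intervalIntegral.integral_comp_sub_right (a := t₁) (b := t)
        (fun s => (t - t₁ - s) ^ (-(2:ℝ)/3) * D₂ s) t₁
      simp only [sub_sub_sub_cancel_right, sub_self] at h1
      rw [h1, hD₂, mild_caputo ρ (x t₁ + y₁) t₁ ht.1, ← hx1 t (Ioo_subset_Ioc_self ht)]
    have hne : ∀ c : ℝ, ∀ᵐ s ∂(volume : Measure ℝ), s ≠ c := fun c => Measure.ae_ne volume c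
    have hc1 : ∀ᵐ s ∂(volume : Measure ℝ), s ∈ uIoc 0 t₁ →
        (t - s) ^ (-(2:ℝ)/3) * D₁ s = (t - s) ^ (-(2:ℝ)/3) * deriv x s := by
      filter_upwards [hne t₁] with s hs hs'
      rw [uIoc_of_le ht₁.le] at hs'
      rw [hd0 s ⟨hs'.1, lt_of_le_of_ne hs'.2 hs⟩]
    have hc2 : ∀ᵐ s ∂(volume : Measure ℝ), s ∈ uIoc t₁ t →
        (t - s) ^ (-(2:ℝ)/3) * D₂ (s - t₁) = (t - s) ^ (-(2:ℝ)/3) * deriv x s := by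
      refine ae_of_all _ fun s hs' => ?_
      rw [uIoc_of_le ht.1.le] at hs'
      rw [hd1 s ⟨hs'.1, lt_of_le_of_lt hs'.2 ht.2⟩]
    have hJ1 := hI1.congr_ae ((ae_restrict_iff' measurableSet_uIoc).2 hc1)
    have hJ2 := hI2.congr_ae ((ae_restrict_iff' measurableSet_uIoc).2 hc2)
    have hsplit := intervalIntegral.integral_add_adjacent_intervals hJ1 hJ2
    rw [← intervalIntegral.integral_congr_ae hc1, ← intervalIntegral.integral_congr_ae hc2,
      hv2] at hsplit
    have hH := H t (Ioo_subset_Ioc_self ht)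
    rw [← hsplit] at hH
    field_simp at hH
    linarith
  have hae := ae_zero_of_potential_zero ht₁ hT (by norm_num) hD₁int hpot
  have hae' : ∀ᵐ s ∂(volume : Measure ℝ), s ∈ Ioc 0 t₁ → D₁ s = 0 := by
    filter_upwards [hae, Measure.ae_ne volume t₁] with s hs hs1 hs'
    exact hs ⟨hs'.1, lt_of_le_of_ne hs'.2 hs1⟩
  -- hence `x` is constant on `(0, t₁]`, while it solves the Caputo equation there
  have hfin : ∀ t ∈ Ioc 0 t₁, ρ * x₀ + t = 0 := by
    intro t ht
    have hz : ∀ᵐ s ∂(volume : Measure ℝ), s ∈ uIoc 0 t → D₁ s = 0 := by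
      filter_upwards [hae'] with s hs hs'
      rw [uIoc_of_le ht.1.le] at hs'
      exact hs ⟨hs'.1, hs'.2.trans ht.2⟩
    have h1 : ∫ s in (0 : ℝ)..t, D₁ s = 0 := intervalIntegral.integral_zero_ae hz
    have h2 : ∫ s in (0 : ℝ)..t, (t - s) ^ (-(2:ℝ)/3) * D₁ s = 0 := by
      refine intervalIntegral.integral_zero_ae ?_
      filter_upwards [hz] with s hs hs'
      rw [hs hs', mul_zero]
    have h3 := hC0 t ht
    rw [h2, hX0 t ht, h1, add_zero] at h3
    exact (mul_eq_zero.1 h3.symm).resolve_left hΓ.ne'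
  have e1 := hfin t₁ ⟨ht₁, le_rfl⟩
  have e2 := hfin (t₁ / 2) ⟨by linarith, by linarith⟩
  linarith
end

section
/- (Theorem 1.1, scalar case) Let 0 < α < 1, ρ, x₀ ∈ ℝ, let 0 = t₀ < t₁ < ⋯ < t_m < t_{m+1} = T, let y₁, …, y_m ∈ ℝ be the impulse values, and let g : [0,T] → ℝ be continuously differentiable. Assume E_{α,1}(ρ t_i^α) ≠ 0 for i = 1, …, m. For k = 0, 1, …, m define the branch functions x_k(t) = E_{α,1}(ρ t^α) ( x₀ + ∑_{i=1}^k y_i / E_{α,1}(ρ t_i^α) ) + ∫_0^t (t−θ)^{α−1} E_{α,α}(ρ (t−θ)^α) g(θ) dθ. Then: (i) x_0(0) = x₀; (ii) for every k ∈ {0,…,m} and every t ∈ (0,T], ({}_0D_t^α x_k)(t) = ρ x_k(t) + g(t); and (iii) for every k ∈ {1,…,m}, x_k(t_k) − x_{k−1}(t_k) = y_k, so the piecewise function equal to x_k on (t_k, t_{k+1}] has jump y_k at each impulse time t_k. -/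
open MeasureTheory Set Filter Topology

/-! ### Beta integrals -/

lemma beta_integral_s14 {p q s : ℝ} (hp : 0 < p) (hq : 0 < q) (hs : 0 < s) :
    ∫ r in (0 : ℝ)..s, (s - r) ^ (q - 1) * r ^ (p - 1) =
      Real.Gamma p * Real.Gamma q / Real.Gamma (p + q) * s ^ (p + q - 1) := by
  have h := Complex.betaIntegral_scaled p q hs
  rw [Complex.betaIntegral_eq_Gamma_mul_div p q (by simpa) (by simpa)] at h
  have e : ∫ x in (0 : ℝ)..s, (x : ℂ) ^ ((p : ℂ) - 1) * ((s : ℂ) - x) ^ ((q : ℂ) - 1) =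
      ∫ x in (0 : ℝ)..s, (((s - x) ^ (q - 1) * x ^ (p - 1) : ℝ) : ℂ) := by
    refine intervalIntegral.integral_congr fun x hx => ?_
    rw [uIcc_of_le hs.le] at hx
    push_cast
    rw [Complex.ofReal_cpow hx.1, Complex.ofReal_cpow (sub_nonneg.2 hx.2)]
    push_cast
    ring
  rw [e, intervalIntegral.integral_ofReal] at h
  apply Complex.ofReal_injective
  rw [h]
  push_cast
  rw [Complex.ofReal_cpow hs.le, ← Complex.Gamma_ofReal, ← Complex.Gamma_ofReal,
    ← Complex.Gamma_ofReal]
  push_cast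
  ring

lemma beta_integrable_s14 {p q s : ℝ} (hp : 0 < p) (hq : 0 < q) (hs : 0 < s) :
    IntervalIntegrable (fun r => (s - r) ^ (q - 1) * r ^ (p - 1)) volume 0 s := by
  -- A non-integrable function has integral zero, whereas this integral is positive.
  apply intervalIntegral.intervalIntegrable_of_integral_ne_zero
  rw [beta_integral_s14 hp hq hs]
  have := Real.Gamma_pos_of_pos hp
  have := Real.Gamma_pos_of_pos hq
  have := Real.Gamma_pos_of_pos (add_pos hp hq)
  positivity

/-! ### Convergence and continuity of the Mittag-Leffler series -/

/-- Log-convexity of `Γ` at `z + 1 = α (z + α) + (1 - α) (z + α + 1)`. It makes the ratio of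
consecutive coefficients of the Mittag-Leffler series tend to zero. -/
lemma gamma_ratio_le {α z : ℝ} (hα0 : 0 < α) (hα1 : α < 1) (hz : 0 < z) :
    Real.Gamma z / Real.Gamma (z + α) ≤ (z + α) ^ (1 - α) / z := by
  have hza : 0 < z + α := by linarith
  have h := Real.Gamma_mul_add_mul_le_rpow_Gamma_mul_rpow_Gamma hza (t := z + α + 1) (by linarith)
    hα0 (sub_pos.2 hα1) (by ring)
  rw [show α * (z + α) + (1 - α) * (z + α + 1) = z + 1 by ring, Real.Gamma_add_one hz.ne',
    Real.Gamma_add_one hza.ne', Real.mul_rpow hza.le (Real.Gamma_pos_of_pos hza).le] at h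
  have hG := Real.Gamma_pos_of_pos hza
  have e : Real.Gamma (z + α) ^ α * Real.Gamma (z + α) ^ (1 - α) = Real.Gamma (z + α) := by
    rw [← Real.rpow_add hG]; simp
  rw [div_le_div_iff₀ hG hz]
  calc _ = z * Real.Gamma z := mul_comm _ _
    _ ≤ _ := h
    _ = (z + α) ^ (1 - α) * (Real.Gamma (z + α) ^ α * Real.Gamma (z + α) ^ (1 - α)) := by ring
    _ = _ := by rw [e]

lemma mlf_summable {α β : ℝ} (hα0 : 0 < α) (hα1 : α < 1) (hβ : 0 < β) (x : ℝ) :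
    Summable fun j : ℕ => x ^ j / Real.Gamma (α * j + β) := by
  rcases eq_or_ne x 0 with rfl | hx
  · refine summable_of_ne_finset_zero (s := {0}) fun j hj => ?_
    simp at hj
    simp [hj]
  have hz (j : ℕ) : 0 < α * j + β := by positivity
  have hG (j : ℕ) := Real.Gamma_pos_of_pos (hz j)
  have hlin : Tendsto (fun j : ℕ => α * j + β) atTop atTop :=
    tendsto_atTop_add_const_right _ _ (tendsto_natCast_atTop_atTop.const_mul_atTop hα0)
  have hpow : Tendsto (fun z : ℝ => (z + α) ^ (1 - α) / z) atTop (𝓝 0) := by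
    have h1 : Tendsto (fun z : ℝ => 2 ^ (1 - α) * z ^ (-α)) atTop (𝓝 0) := by
      simpa using (tendsto_rpow_neg_atTop hα0).const_mul ((2 : ℝ) ^ (1 - α))
    refine squeeze_zero' ?_ ?_ h1
    · filter_upwards [eventually_gt_atTop 0] with z hz0
      positivity
    · filter_upwards [eventually_gt_atTop 1] with z hz1
      have hz0 : 0 < z := by linarith
      have : (z + α) ^ (1 - α) ≤ 2 ^ (1 - α) * z ^ (1 - α) := by
        rw [← Real.mul_rpow (by norm_num) hz0.le]
        exact Real.rpow_le_rpow (by positivity) (by linarith) (by linarith)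
      calc _ ≤ 2 ^ (1 - α) * z ^ (1 - α) / z := by gcongr
        _ = _ := by
          rw [show -α = (1 - α) - 1 by ring, Real.rpow_sub_one hz0.ne']; ring
  refine summable_of_ratio_test_tendsto_lt_one (l := 0) one_pos ?_ ?_
  · exact Eventually.of_forall fun j => div_ne_zero (pow_ne_zero _ hx) (hG j).ne'
  · have h2 := (hpow.comp hlin).const_mul |x|
    rw [mul_zero] at h2
    refine squeeze_zero (fun j => by positivity) (fun j => ?_) h2
    have e : α * ((j + 1 : ℕ) : ℝ) + β = α * j + β + α := by push_cast; ring
    have h3 := gamma_ratio_le hα0 hα1 (hz j)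
    have hGe := hG (j + 1)
    rw [e] at hGe ⊢
    have hxj : 0 < |x| ^ j := by positivity
    calc _ = |x| * (Real.Gamma (α * j + β) / Real.Gamma (α * j + β + α)) := by
          simp only [norm_div, norm_pow, Real.norm_eq_abs, abs_of_pos hGe, abs_of_pos (hG j)]
          have := hG j
          field_simp
          ring
      _ ≤ _ := mul_le_mul_of_nonneg_left h3 (abs_nonneg x)

lemma mlf_continuous_s14 {α β : ℝ} (hα0 : 0 < α) (hα1 : α < 1) (hβ : 0 < β) :
    Continuous (mlf α β) := by
  rw [continuous_iff_continuousAt]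
  intro x
  -- On `[-(|x| + 1), |x| + 1]` the series is dominated by its value at `|x| + 1`.
  have hc : ContinuousOn (mlf α β) (Icc (-(|x| + 1)) (|x| + 1)) := by
    refine continuousOn_tsum (u := fun j : ℕ => (|x| + 1) ^ j / Real.Gamma (α * j + β))
      (fun j => by fun_prop) (mlf_summable hα0 hα1 hβ _) fun j y hy => ?_
    have hG : 0 < Real.Gamma (α * j + β) := Real.Gamma_pos_of_pos (by positivity)
    rw [norm_div, norm_pow, Real.norm_eq_abs, Real.norm_eq_abs, abs_of_pos hG]
    have := abs_le.2 hy
    gcongr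
  refine hc.continuousAt (Icc_mem_nhds ?_ ?_)
  · linarith [neg_abs_le x]
  · linarith [le_abs_self x]

/-! ### The solution kernel -/

/-- The scalar solution kernel `T_α(u) = u^(α-1) E_{α,α}(ρ u^α)`. -/
noncomputable def solKer (α ρ u : ℝ) : ℝ := u ^ (α - 1) * mlf α α (ρ * u ^ α)

lemma solKer_beta_integrable {α q s : ℝ} (hα0 : 0 < α) (hα1 : α < 1) (ρ : ℝ) (hq : 0 < q)
    (hs : 0 < s) :
    IntervalIntegrable (fun r => (s - r) ^ (q - 1) * solKer α ρ r) volume 0 s := by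
  have hE : Continuous fun r : ℝ => mlf α α (ρ * r ^ α) :=
    (mlf_continuous_s14 hα0 hα1 hα0).comp
      (continuous_const.mul (Real.continuous_rpow_const hα0.le))
  refine ((beta_integrable_s14 hα0 hq hs).continuousOn_mul hE.continuousOn).congr fun r _ => ?_
  simp only [solKer]
  ring

lemma solKer_integrable {α s : ℝ} (hα0 : 0 < α) (hα1 : α < 1) (ρ : ℝ) (hs : 0 < s) :
    IntervalIntegrable (solKer α ρ) volume 0 s := by
  simpa using solKer_beta_integrable hα0 hα1 ρ one_pos hs

/-- The convolution of the kernel with the power `u^(q-1)` is again of Mittag-Leffler type, with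
second parameter raised by `q`. Termwise, `B(αj + α, q) / Γ(αj + α) = Γ(q) / Γ(αj + α + q)`. -/
lemma solKer_beta_integral {α q s : ℝ} (hα0 : 0 < α) (hα1 : α < 1) (ρ : ℝ) (hq : 0 < q)
    (hs : 0 < s) :
    ∫ r in (0 : ℝ)..s, (s - r) ^ (q - 1) * solKer α ρ r =
      Real.Gamma q * s ^ (α + q - 1) * mlf α (α + q) (ρ * s ^ α) := by
  have hG (j : ℕ) {β : ℝ} (hβ : 0 < β) : 0 < Real.Gamma (α * j + β) :=
    Real.Gamma_pos_of_pos (by positivity)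
  have hp (j : ℕ) : 0 < α * j + α := by positivity
  -- `F c j` is the `j`-th term of the integrand; `c = |ρ|` is used to bound the norms for `c = ρ`.
  set F : ℝ → ℕ → ℝ → ℝ := fun c j r =>
    c ^ j / Real.Gamma (α * j + α) * ((s - r) ^ (q - 1) * r ^ (α * j + α - 1)) with hF
  have hpow (j : ℕ) {r : ℝ} (hr : 0 < r) (b : ℝ) : r ^ (α * j + b) = r ^ b * (r ^ α) ^ j := by
    rw [Real.rpow_add hr, Real.rpow_mul hr.le, Real.rpow_natCast, mul_comm]
  have hFint (c : ℝ) (j : ℕ) : IntervalIntegrable (F c j) volume 0 s :=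
    (beta_integrable_s14 (hp j) hq hs).const_mul _
  have hFval (c : ℝ) (j : ℕ) : ∫ r in (0 : ℝ)..s, F c j r =
      Real.Gamma q * s ^ (α + q - 1) * ((c * s ^ α) ^ j / Real.Gamma (α * j + (α + q))) := by
    simp only [hF]
    rw [intervalIntegral.integral_const_mul, beta_integral_s14 (hp j) hq hs,
      show α * j + α + q - 1 = α * j + (α + q - 1) by ring, hpow j hs, mul_pow, ← add_assoc]
    have := (hG j hα0).ne'
    field_simp
  have hnorm (j : ℕ) : ∫ r in Ioc 0 s, ‖F ρ j r‖ = ∫ r in (0 : ℝ)..s, F |ρ| j r := by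
    rw [intervalIntegral.integral_of_le hs.le]
    refine setIntegral_congr_fun measurableSet_Ioc fun r hr => ?_
    have h1 : 0 ≤ s - r := sub_nonneg.2 hr.2
    have h0 := hr.1.le
    simp only [hF]
    rw [norm_mul, norm_div, norm_pow, Real.norm_eq_abs, Real.norm_of_nonneg (hG j hα0).le,
      Real.norm_of_nonneg (by positivity)]
  have key := hasSum_integral_of_summable_integral_norm (μ := volume.restrict (Ioc 0 s))
    (F := F ρ) (fun j => (intervalIntegrable_iff_integrableOn_Ioc_of_le hs.le).1 (hFint ρ j)) (by
      simp only [hnorm, hFval]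
      exact (mlf_summable hα0 hα1 (by positivity) _).mul_left _)
  have key' := key.tsum_eq
  simp only [← intervalIntegral.integral_of_le hs.le, hFval] at key'
  rw [tsum_mul_left] at key'
  rw [mlf, key', intervalIntegral.integral_of_le hs.le, intervalIntegral.integral_of_le hs.le]
  refine setIntegral_congr_fun measurableSet_Ioc fun r hr => ?_
  simp only [hF, solKer, mlf]
  rw [← tsum_mul_left, ← tsum_mul_left]
  refine tsum_congr fun j => ?_
  rw [show α * j + α - 1 = α * j + (α - 1) by ring, hpow j hr.1, mul_pow]
  ring

lemma mlf_shift {α : ℝ} (hα0 : 0 < α) (hα1 : α < 1) (z : ℝ) :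
    mlf α 1 z = 1 + z * mlf α (α + 1) z := by
  rw [mlf, (mlf_summable hα0 hα1 one_pos z).tsum_eq_zero_add, mlf, ← tsum_mul_left]
  congr 1
  · simp
  · refine tsum_congr fun j => ?_
    rw [show α * ((j + 1 : ℕ) : ℝ) + 1 = α * j + (α + 1) by push_cast; ring, pow_succ]
    ring

lemma mlf_eq_one_add_integral {α s : ℝ} (hα0 : 0 < α) (hα1 : α < 1) (ρ : ℝ) (hs : 0 < s) :
    mlf α 1 (ρ * s ^ α) = 1 + ρ * ∫ r in (0 : ℝ)..s, solKer α ρ r := by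
  have h := solKer_beta_integral hα0 hα1 ρ one_pos hs
  simp only [sub_self, Real.rpow_zero, one_mul, Real.Gamma_one, add_sub_cancel_right] at h
  rw [h, mlf_shift hα0 hα1]
  ring

/-! ### Associativity of convolution -/

/-- `(a * (b * h))(s) = ((a * b) * h)(s)` for convolution on the half-line, together with the
existence of the left-hand side, when `a`, `b` are integrable on `(0, s)`. -/
lemma conv_assoc {a b h : ℝ → ℝ} {s : ℝ} (hs : 0 < s) (ha : IntervalIntegrable a volume 0 s)
    (hb : IntervalIntegrable b volume 0 s) (hh : Continuous h) :
    IntervalIntegrable (fun r => a (s - r) * ∫ θ in (0 : ℝ)..r, b (r - θ) * h θ) volume 0 s ∧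
    ∫ r in (0 : ℝ)..s, a (s - r) * ∫ θ in (0 : ℝ)..r, b (r - θ) * h θ =
      ∫ θ in (0 : ℝ)..s, (∫ v in (0 : ℝ)..(s - θ), a (s - θ - v) * b v) * h θ := by
  rw [intervalIntegrable_iff_integrableOn_Ioo_of_le hs.le] at ha hb
  -- Cutting off to `(0, s)` turns the triangle `0 < θ < r < s` into the support of a function on
  -- the plane, to which Fubini's theorem applies.
  set A := (Ioo 0 s).indicator a with hA
  set B := (Ioo 0 s).indicator b with hB
  set H := (Ioo 0 s).indicator h with hH
  have hAi : Integrable A := (integrable_indicator_iff measurableSet_Ioo).2 ha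
  have hBi : Integrable B := (integrable_indicator_iff measurableSet_Ioo).2 hb
  have hHm : Measurable H := hh.measurable.indicator measurableSet_Ioo
  obtain ⟨C, hC⟩ := isCompact_Icc.exists_bound_of_continuousOn (s := Icc 0 s) hh.continuousOn
  have hHb (θ : ℝ) : ‖H θ‖ ≤ |C| := by
    by_cases hθ : θ ∈ Ioo 0 s
    · rw [hH, indicator_of_mem hθ]
      exact (hC θ (Ioo_subset_Icc_self hθ)).trans (le_abs_self C)
    · rw [hH, indicator_of_notMem hθ]
      simp
  have hI : Integrable (fun p : ℝ × ℝ => A (s - p.1) * B (p.1 - p.2) * H p.2)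
      (volume.prod volume) := by
    have h1 := Integrable.convolution_integrand (ContinuousLinearMap.mul ℝ ℝ)
      (hAi.comp_sub_left s) hBi.comp_neg (μ := volume) (ν := volume)
    have h2 := h1.swap
    have h3 : Integrable (fun p : ℝ × ℝ => A (s - p.1) * B (p.1 - p.2)) (volume.prod volume) := by
      refine h2.congr (Eventually.of_forall fun p => ?_)
      simp
    exact h3.mul_bdd (hHm.comp measurable_snd).aestronglyMeasurable
      (Eventually.of_forall fun p => hHb p.2)
  have hinner {r : ℝ} (hr : r ∈ Ioo 0 s) : ∫ θ, A (s - r) * B (r - θ) * H θ =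
      a (s - r) * ∫ θ in (0 : ℝ)..r, b (r - θ) * h θ := by
    simp only [mul_assoc]
    rw [integral_const_mul, intervalIntegral.integral_of_le hr.1.le, integral_Ioc_eq_integral_Ioo,
      ← integral_indicator measurableSet_Ioo]
    congr 1
    · rw [hA, indicator_of_mem]
      exact ⟨by linarith [hr.2], by linarith [hr.1]⟩
    · refine integral_congr_ae (Eventually.of_forall fun θ => ?_)
      obtain ⟨h0, h1⟩ := hr
      simp only [hB, hH, indicator_apply, mem_Ioo]
      split_ifs <;> first | rfl | (simp; done) | (exfalso; grind)
  have houter_r {r : ℝ} (hr : r ∉ Ioc 0 s) : ∫ θ, A (s - r) * B (r - θ) * H θ = 0 := by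
    refine integral_eq_zero_of_ae (Eventually.of_forall fun θ => ?_)
    simp only [hA, hB, hH, indicator_apply, mem_Ioo, Pi.zero_apply]
    split_ifs <;> first | rfl | (simp; done) | (exfalso; grind)
  have hinner2 {θ : ℝ} (hθ : θ ∈ Ioo 0 s) : ∫ r, A (s - r) * B (r - θ) * H θ =
      (∫ v in (0 : ℝ)..(s - θ), a (s - θ - v) * b v) * h θ := by
    rw [integral_mul_const, ← integral_add_right_eq_self _ θ,
      intervalIntegral.integral_of_le (sub_nonneg.2 hθ.2.le), integral_Ioc_eq_integral_Ioo,
      ← integral_indicator measurableSet_Ioo]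
    congr 1
    · refine integral_congr_ae (Eventually.of_forall fun v => ?_)
      obtain ⟨h0, h1⟩ := hθ
      simp only [hA, hB, indicator_apply, mem_Ioo, sub_add_eq_sub_sub_swap, add_sub_cancel_right]
      split_ifs <;> first | rfl | (simp; done) | (exfalso; grind)
    · rw [hH, indicator_of_mem hθ]
  have houter_θ {θ : ℝ} (hθ : θ ∉ Ioo 0 s) : ∫ r, A (s - r) * B (r - θ) * H θ = 0 := by
    simp [hH, indicator_of_notMem hθ]
  have hr_int := hI.integral_prod_left
  constructor
  · rw [intervalIntegrable_iff_integrableOn_Ioo_of_le hs.le]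
    exact hr_int.integrableOn.congr_fun (fun r hr => hinner hr) measurableSet_Ioo
  · have hswap := integral_integral_swap (f := fun r θ => A (s - r) * B (r - θ) * H θ) hI
    rw [← setIntegral_eq_integral_of_forall_compl_eq_zero (s := Ioc 0 s) (fun r hr => houter_r hr),
      ← setIntegral_eq_integral_of_forall_compl_eq_zero (s := Ioo 0 s)
        (fun θ hθ => houter_θ hθ), integral_Ioc_eq_integral_Ioo] at hswap
    rw [intervalIntegral.integral_of_le hs.le, intervalIntegral.integral_of_le hs.le,
      integral_Ioc_eq_integral_Ioo, integral_Ioc_eq_integral_Ioo,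
      ← setIntegral_congr_fun measurableSet_Ioo (fun r hr => hinner hr), hswap]
    exact setIntegral_congr_fun measurableSet_Ioo (fun θ hθ => hinner2 hθ)

/-! ### The Caputo derivative of a branch function -/

/-- `T * g = g(0) P + P * h` for `g = g(0) + 1 * h` and `P` the primitive of `T`: an integration by
parts, obtained from associativity of convolution. -/
lemma solKer_conv_eq {α T : ℝ} (hα0 : 0 < α) (hα1 : α < 1) (ρ : ℝ) {g h : ℝ → ℝ}
    (hh : Continuous h) (hg : ∀ θ ∈ Icc 0 T, g θ = g 0 + ∫ u in (0 : ℝ)..θ, h u)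
    {t : ℝ} (ht : t ∈ Ioc 0 T) :
    ∫ θ in (0 : ℝ)..t, solKer α ρ (t - θ) * g θ =
      g 0 * (∫ v in (0 : ℝ)..t, solKer α ρ v) +
        ∫ θ in (0 : ℝ)..t, (∫ v in (0 : ℝ)..(t - θ), solKer α ρ v) * h θ := by
  have hT := solKer_integrable hα0 hα1 ρ ht.1
  obtain ⟨hi, he⟩ := conv_assoc ht.1 hT (b := fun _ => 1) (by simp) hh
  simp only [one_mul, mul_one] at hi he
  have hflip (z : ℝ) : ∫ v in (0 : ℝ)..z, solKer α ρ (z - v) = ∫ v in (0 : ℝ)..z, solKer α ρ v := by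
    simp
  have hT' : IntervalIntegrable (fun θ => solKer α ρ (t - θ)) volume 0 t := by
    simpa using (hT.comp_sub_left t).symm
  simp only [hflip] at he
  rw [← he, ← hflip t, ← intervalIntegral.integral_const_mul,
    ← intervalIntegral.integral_add (hT'.const_mul _) hi]
  refine intervalIntegral.integral_congr fun θ hθ => ?_
  rw [uIcc_of_le ht.1.le] at hθ
  rw [hg θ ⟨hθ.1, hθ.2.trans ht.2⟩]
  ring

/-- The function `X = c S + T * g` solves `D^α X = ρ X + g`. -/
lemma caputo_mild {α T : ℝ} (hα0 : 0 < α) (hα1 : α < 1) (ρ c : ℝ) {g h X : ℝ → ℝ}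
    (hh : Continuous h) (hg : ∀ θ ∈ Icc 0 T, g θ = g 0 + ∫ u in (0 : ℝ)..θ, h u)
    (hX : ∀ t, X t = mlf α 1 (ρ * t ^ α) * c + ∫ θ in (0 : ℝ)..t, solKer α ρ (t - θ) * g θ)
    {s : ℝ} (hs : s ∈ Ioc 0 T) :
    (1 / Real.Gamma (1 - α)) * ∫ r in (0 : ℝ)..s, (s - r) ^ (-α) * deriv X r =
      ρ * X s + g s := by
  have hs0 := hs.1
  have hq : 0 < 1 - α := sub_pos.2 hα1
  have hGq := Real.Gamma_pos_of_pos hq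
  have hT := solKer_integrable hα0 hα1 ρ hs0
  set W : ℝ → ℝ := fun r => ∫ θ in (0 : ℝ)..r, solKer α ρ (r - θ) * h θ with hW
  obtain ⟨hWi, -⟩ := conv_assoc hs0 (a := fun _ => 1) (by simp) hT hh
  simp only [one_mul] at hWi
  have hWint {t : ℝ} (ht : t ∈ Ioc 0 T) : ∫ r in (0 : ℝ)..t, W r =
      ∫ θ in (0 : ℝ)..t, (∫ v in (0 : ℝ)..(t - θ), solKer α ρ v) * h θ := by
    have := (conv_assoc ht.1 (a := fun _ => 1) (by simp)
      (solKer_integrable hα0 hα1 ρ ht.1) hh).2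
    simpa only [one_mul] using this
  have hkint : IntervalIntegrable (fun r => r ^ (-α)) volume 0 s :=
    intervalIntegral.intervalIntegrable_rpow' (by linarith)
  obtain ⟨hkWi, hkW⟩ := conv_assoc hs0 hkint hT hh
  have hkT {z : ℝ} (hz : 0 < z) : ∫ v in (0 : ℝ)..z, (z - v) ^ (-α) * solKer α ρ v =
      Real.Gamma (1 - α) * mlf α 1 (ρ * z ^ α) := by
    have := solKer_beta_integral hα0 hα1 ρ hq hz
    simpa using this
  have hkTi : IntervalIntegrable (fun r => (s - r) ^ (-α) * solKer α ρ r) volume 0 s := by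
    have := solKer_beta_integrable hα0 hα1 ρ hq hs0
    simpa using this
  set D : ℝ → ℝ := fun r => (c * ρ + g 0) * solKer α ρ r + W r with hD
  have hDi : IntervalIntegrable D volume 0 s := (hT.const_mul _).add hWi
  have hXD {t : ℝ} (ht : t ∈ Ioc 0 s) : X t = c + ∫ r in (0 : ℝ)..t, D r := by
    have htT : t ∈ Ioc 0 T := ⟨ht.1, ht.2.trans hs.2⟩
    have hsub : uIcc 0 t ⊆ uIcc 0 s := by
      rw [uIcc_of_le ht.1.le, uIcc_of_le hs0.le]
      exact Icc_subset_Icc_right ht.2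
    rw [hX, solKer_conv_eq hα0 hα1 ρ hh hg htT, mlf_eq_one_add_integral hα0 hα1 ρ ht.1,
      intervalIntegral.integral_add ((hT.mono_set hsub).const_mul _) (hWi.mono_set hsub),
      intervalIntegral.integral_const_mul, hWint htT]
    ring
  have hderiv : ∫ r in (0 : ℝ)..s, (s - r) ^ (-α) * deriv X r =
      ∫ r in (0 : ℝ)..s, (s - r) ^ (-α) * D r := by
    refine intervalIntegral.integral_congr_ae ?_
    -- The formula for `X` is available only on `(0, s]`, a neighbourhood of `r` when `r < s`.
    have hne : ∀ᵐ r : ℝ, r ≠ s := by simp [ae_iff]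
    filter_upwards [hDi.ae_hasDerivAt_integral, hne] with r hr hrs hmem
    rw [uIoc_of_le hs0.le] at hmem
    have hlt : r < s := lt_of_le_of_ne hmem.2 hrs
    have h1 := (hr (by rw [uIcc_of_le hs0.le]; exact Ioc_subset_Icc_self hmem) 0
      left_mem_uIcc).const_add c
    have h2 : X =ᶠ[𝓝 r] fun t => c + ∫ r in (0 : ℝ)..t, D r := by
      filter_upwards [Ioo_mem_nhds hmem.1 hlt] with t ht
      exact hXD (Ioo_subset_Ioc_self ht)
    rw [(h1.congr_of_eventuallyEq h2).deriv]
  have hsplit : ∫ r in (0 : ℝ)..s, (s - r) ^ (-α) * D r =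
      (c * ρ + g 0) * (Real.Gamma (1 - α) * mlf α 1 (ρ * s ^ α)) +
        ∫ r in (0 : ℝ)..s, (s - r) ^ (-α) * W r := by
    rw [← hkT hs0, ← intervalIntegral.integral_const_mul,
      ← intervalIntegral.integral_add (hkTi.const_mul _) hkWi]
    refine intervalIntegral.integral_congr fun r _ => ?_
    simp only [hD]
    ring
  have hPc : ContinuousOn (fun z => ∫ v in (0 : ℝ)..z, solKer α ρ v) (uIcc 0 s) :=
    intervalIntegral.continuousOn_primitive_interval' hT left_mem_uIcc
  have hPi : IntervalIntegrable (fun θ => (∫ v in (0 : ℝ)..(s - θ), solKer α ρ v) * h θ)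
      volume 0 s := by
    refine ContinuousOn.intervalIntegrable (ContinuousOn.mul ?_ hh.continuousOn)
    refine hPc.comp (by fun_prop) fun θ hθ => ?_
    rw [uIcc_of_le hs0.le] at hθ ⊢
    exact ⟨sub_nonneg.2 hθ.2, by linarith [hθ.1]⟩
  have hkW' : ∫ r in (0 : ℝ)..s, (s - r) ^ (-α) * W r =
      Real.Gamma (1 - α) * ((∫ θ in (0 : ℝ)..s, h θ) +
        ρ * ∫ θ in (0 : ℝ)..s, (∫ v in (0 : ℝ)..(s - θ), solKer α ρ v) * h θ) := by
    rw [hkW, ← intervalIntegral.integral_const_mul,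
      ← intervalIntegral.integral_add (hh.intervalIntegrable _ _) (hPi.const_mul _),
      ← intervalIntegral.integral_const_mul]
    simp only [intervalIntegral.integral_of_le hs0.le, integral_Ioc_eq_integral_Ioo]
    refine setIntegral_congr_fun measurableSet_Ioo fun θ hθ => ?_
    have hz : 0 < s - θ := sub_pos.2 hθ.2
    rw [hkT hz, mlf_eq_one_add_integral hα0 hα1 ρ hz]
    ring
  have hgs := hg s (Ioc_subset_Icc_self hs)
  rw [hderiv, hsplit, hkW', hX, solKer_conv_eq hα0 hα1 ρ hh hg hs, hgs,
    mlf_eq_one_add_integral hα0 hα1 ρ hs0]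
  field_simp
  ring

/-- A `C¹` function on `[0, T]` is there the primitive of a function continuous on all of `ℝ`,
namely its derivative extended by constants. -/
lemma exists_continuous_primitive {T : ℝ} (hT : 0 < T) {g : ℝ → ℝ}
    (hg : ContDiffOn ℝ 1 g (Icc 0 T)) :
    ∃ h : ℝ → ℝ, Continuous h ∧ ∀ θ ∈ Icc 0 T, g θ = g 0 + ∫ u in (0 : ℝ)..θ, h u := by
  have hc := hg.continuousOn_derivWithin (uniqueDiffOn_Icc hT) le_rfl
  refine ⟨IccExtend hT.le ((Icc 0 T).domRestrict (derivWithin g (Icc 0 T))),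
    hc.domRestrict.Icc_extend', fun θ hθ => ?_⟩
  rw [intervalIntegral.integral_eq_sub_of_hasDerivAt_of_le hθ.1
    (hg.continuousOn.mono (Icc_subset_Icc_right hθ.2)) (fun u hu => ?_)
    (hc.domRestrict.Icc_extend'.intervalIntegrable _ _)]
  · ring
  · have hu' : u ∈ Ioo 0 T := ⟨hu.1, hu.2.trans_le hθ.2⟩
    rw [IccExtend_of_mem hT.le _ (Ioo_subset_Icc_self hu')]
    exact ((hg.differentiableOn one_ne_zero u (Ioo_subset_Icc_self hu')).hasDerivWithinAt).hasDerivAt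
      (Icc_mem_nhds hu'.1 hu'.2)

/-- Theorem 1.1, scalar case: with branch functions
`x_k(t) = E_{α,1}(ρ t^α) (x₀ + ∑_{i=1}^k y_i / E_{α,1}(ρ t_i^α))`
`        + ∫_0^t (t−θ)^{α−1} E_{α,α}(ρ (t−θ)^α) g(θ) dθ`,
one has: (i) `x_0(0) = x₀`; (ii) for every `k ≤ m` and every `t ∈ (0,T]`,
`({}_0D_t^α x_k)(t) = ρ x_k(t) + g(t)`; (iii) for `1 ≤ k ≤ m`,
`x_k(t_k) − x_{k−1}(t_k) = y_k`, so the piecewise solution has jump `y_k` at `t_k`. -/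
theorem new_mild_solution_correct {α : ℝ} (hα0 : 0 < α) (hα1 : α < 1)
    (ρ x₀ : ℝ) (m : ℕ) (t : ℕ → ℝ) (ht0 : t 0 = 0)
    (hmono : ∀ i j : ℕ, i < j → j ≤ m + 1 → t i < t j)
    (T : ℝ) (hT : t (m + 1) = T)
    (y : ℕ → ℝ) (g : ℝ → ℝ) (hg : ContDiffOn ℝ 1 g (Set.Icc 0 T))
    (hS : ∀ i : ℕ, 1 ≤ i → i ≤ m → mlf α 1 (ρ * t i ^ α) ≠ 0)
    (x : ℕ → ℝ → ℝ)
    (hx : ∀ (k : ℕ) (t' : ℝ),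
      x k t' = mlf α 1 (ρ * t' ^ α) *
          (x₀ + ∑ i ∈ Finset.range k, y (i + 1) / mlf α 1 (ρ * t (i + 1) ^ α)) +
        ∫ θ in (0 : ℝ)..t', (t' - θ) ^ (α - 1) * mlf α α (ρ * (t' - θ) ^ α) * g θ) :
    x 0 0 = x₀ ∧
      (∀ k ≤ m, ∀ s ∈ Set.Ioc (0 : ℝ) T,
        (1 / Real.Gamma (1 - α)) *
            ∫ r in (0 : ℝ)..s, (s - r) ^ (-α) * deriv (x k) r =
          ρ * x k s + g s) ∧
      (∀ k : ℕ, 1 ≤ k → k ≤ m → x k (t k) - x (k - 1) (t k) = y k) := by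
  have hTpos : 0 < T := by
    rw [← hT, ← ht0]
    exact hmono 0 (m + 1) (Nat.succ_pos m) le_rfl
  refine ⟨?_, fun k _ s hs => ?_, fun k hk1 hkm => ?_⟩
  · simp [hx, Real.zero_rpow hα0.ne', mlf_shift hα0 hα1]
  · obtain ⟨h, hh, hgh⟩ := exists_continuous_primitive hTpos hg
    exact caputo_mild hα0 hα1 ρ _ hh hgh (hx k) hs
  · obtain ⟨j, rfl⟩ : ∃ j, k = j + 1 := ⟨k - 1, by omega⟩
    rw [hx, hx, Nat.add_sub_cancel, Finset.sum_range_succ]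
    have := hS (j + 1) hk1 hkm
    field_simp
    ring
end
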